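/- Fix δ > 0, ε > 0 and C > 0. Then there exist C' > 0 and n₀ such that the following holds for all n ≥ n₀: for any graph G on [n] with M = e(G), any k with k/n ∈ [δ, 1−δ], if (1/n)·Σ_{v∈[n]} |d(v) − d(G)|³ ≤ C·n^{3/2+ε}, then for each i ∈ {0,1,2,3}, E[|W' − W|^i · |W̄' − W̄|^{3−i}] ≤ C'·n^{−3/2+ε}, where the expectation is over the uniform random k-set S, x uniform on S and x̄ uniform on S̄. -/

import Mathlib

/-!
Condition on the swapped pair `x ∈ S`, `y ∉ S`: then `T = S \ {x}` is a uniform `(k-1)`-subset of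
`U = {x, y}ᶜ`. With `f w = 1[w ~ y] - 1[w ~ x]` one has `e(S') - e(S) = ∑_{w ∈ T} f w` and
`e(S̄) - e(S̄') = ∑_{w ∈ U \ T} f w`, while `∑_{w ∈ U} f w = d(y) - d(x)`. Hence both increments are
at most `|X| + |d(y) - d(x)|`, where `X` is the deviation of `∑_{w ∈ T} f w` from its mean.

The hypothesis on degrees controls `E |d(y) - d(x)|³`, since `x` and `y` are each uniform on `[n]`.
For `X`, reveal `T` one element at a time: sampling without replacement pulls a centred sum back
towards `0`, so the terms of odd order in `X` contribute nothing positive, and induction gives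
`E X² = O(k)` and `E X⁴ = O(k²)`; Cauchy–Schwarz then gives `E |X|³ = O(k^{3/2})`.
-/

open Finset MeasureTheory ProbabilityTheory

noncomputable section

/-- Uniform probability of an event `P` over a finite sample space `Ω`. -/
def Pru {α : Type*} (Ω : Finset α) (P : α → Prop) : ℝ := by
  classical exact ((Ω.filter P).card : ℝ) / Ω.card

/-- Expectation of `f` under the uniform distribution on `Ω`. -/
def Exu {α : Type*} (Ω : Finset α) (f : α → ℝ) : ℝ := (∑ a ∈ Ω, f a) / Ω.card

/-- Variance of `f` under the uniform distribution on `Ω`. -/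
def Varu {α : Type*} (Ω : Finset α) (f : α → ℝ) : ℝ := Exu Ω (fun a => (f a - Exu Ω f) ^ 2)

/-- Conditional expectation of `f` given the value of `g`, under uniform distribution on `Ω`. -/
def condExpU {α β : Type*} (Ω : Finset α) (f : α → ℝ) (g : α → β) (ω : α) : ℝ := by
  classical exact Exu (Ω.filter (fun ω' => g ω' = g ω)) f

/-- The edge set of the complete graph on `[n]`. -/
def completeEdges (n : ℕ) : Finset (Sym2 (Fin n)) := by
  classical exact Finset.univ.filter (fun e => ¬ e.IsDiag)

/-- A finset of `Sym2`s is a graph if it has no loops. -/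
def IsGraph {n : ℕ} (G : Finset (Sym2 (Fin n))) : Prop := ∀ e ∈ G, ¬ e.IsDiag

/-- The sample space of `G_{n,M}`: all graphs on `[n]` with exactly `M` edges. -/
def graphsM (n M : ℕ) : Finset (Finset (Sym2 (Fin n))) := by
  classical exact (completeEdges n).powerset.filter (fun G => G.card = M)

/-- `e(S)`: number of edges of `G` with both endpoints in `S`. -/
def edgesIn {n : ℕ} (G : Finset (Sym2 (Fin n))) (S : Finset (Fin n)) : ℕ := by
  classical exact (G.filter (fun e => ∀ v ∈ e, v ∈ S)).card

/-- `d_S(v)`: number of neighbours of `v` (in graph `G`) lying in `S`. -/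
def dS {n : ℕ} (G : Finset (Sym2 (Fin n))) (S : Finset (Fin n)) (v : Fin n) : ℕ := by
  classical exact (S.filter (fun w => s(v, w) ∈ G)).card

/-- All `k`-element subsets of `[n]`. -/
def kSets (n k : ℕ) : Finset (Finset (Fin n)) := Finset.univ.powersetCard k

/-- Probability of an event under the uniform random graph `G_{n,M}`. -/
def PrGnM (n M : ℕ) (P : Finset (Sym2 (Fin n)) → Prop) : ℝ := Pru (graphsM n M) P

/-- Probability of an event under the binomial random graph `G_{n,p}`. -/
def PrGnp (n : ℕ) (p : ℝ) (P : Finset (Sym2 (Fin n)) → Prop) : ℝ := by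
  classical exact ∑ G ∈ (completeEdges n).powerset,
    if (P G) then p ^ G.card * (1 - p) ^ ((completeEdges n).card - G.card) else 0

/-- `N = n(n-1)/2` as a real number. -/
def Nr (n : ℕ) : ℝ := (n : ℝ) * ((n : ℝ) - 1) / 2

/-- `K = k(k-1)/2` as a real number. -/
def Kr (k : ℕ) : ℝ := (k : ℝ) * ((k : ℝ) - 1) / 2

/-- `λ = ((n²-k²)k²/(2n⁴))·(M(N-M)/N²)`. -/
def lamP (n M k : ℕ) : ℝ :=
  (((n:ℝ)^2 - (k:ℝ)^2) * (k:ℝ)^2 / (2 * (n:ℝ)^4)) * ((M:ℝ) * (Nr n - (M:ℝ)) / (Nr n)^2)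

/-- The mean `K·M/N`. -/
def muP (n M k : ℕ) : ℝ := Kr k * (M:ℝ) / Nr n

/-- `W = (e(S) - K·M/N)/n`. -/
def Wfun (n M k : ℕ) (G : Finset (Sym2 (Fin n))) (S : Finset (Fin n)) : ℝ :=
  ((edgesIn G S : ℝ) - muP n M k) / n

/-- `V = Σ_v d(v)² - n·d(G)²`, i.e. `n` times the degree variance. -/
def Vdeg {n : ℕ} (G : Finset (Sym2 (Fin n))) : ℝ :=
  (∑ v : Fin n, (dS G Finset.univ v : ℝ) ^ 2) - (n:ℝ) * (2 * (G.card : ℝ) / n) ^ 2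

/-- Gaussian CDF with mean `m` and variance `v`. -/
def gaussCdf (m v z : ℝ) : ℝ := ((gaussianReal m v.toNNReal) (Set.Iic z)).toReal

/-- Gaussian measure of a set, mean `m`, variance `v`. -/
def gaussMeas (m v : ℝ) (A : Set ℝ) : ℝ := ((gaussianReal m v.toNNReal) A).toReal

/-- Gaussian density with mean `m` and variance `v`. -/
def gaussPdf (m v x : ℝ) : ℝ := gaussianPDFReal m v.toNNReal x

/-- `P(Y ∈ ·)` for `Y ~ Bin(ν, p)`. -/
def binomPr (ν : ℕ) (p : ℝ) (P : ℕ → Prop) : ℝ := by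
  classical exact ∑ j ∈ Finset.range (ν + 1),
    if (P j) then (ν.choose j : ℝ) * p ^ j * (1 - p) ^ (ν - j) else 0

/-- Sample space for "uniform `k`-set `S`, then uniform `x ∈ S` and `x̄ ∈ S̄`". -/
def SwapΩ (n k : ℕ) : Finset (Σ _ : Finset (Fin n), Fin n × Fin n) :=
  (kSets n k).sigma (fun S => S ×ˢ Sᶜ)

/-- A triple `(a, r, t)` is valid for `β`. -/
def ValidTriple (β : ℝ) (n a r t : ℕ) : Prop :=
  a ≤ r ∧
  (∃ c : ℝ, 1/2 ≤ c ∧ c ≤ 1 ∧ (a : ℝ) = c * (t:ℝ) ^ ((3:ℝ)/2) * (n:ℝ) ^ (2*β - 1/2)) ∧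
  (r : ℝ) ≤ (n:ℝ) ^ (-β) * Real.sqrt ((n:ℝ) * (t:ℝ))

open scoped BigOperators

/-! ### Uniform averages -/

section Average

variable {α β M : Type*} [AddCommMonoid M] [Module ℚ≥0 M]

lemma Exu_eq_expect (s : Finset α) (f : α → ℝ) : Exu s f = 𝔼 a ∈ s, f a :=
  (expect_eq_sum_div_card s f).symm

lemma expect_sigma_of_card_eq {σ : α → Type*} {s : Finset α} {t : ∀ a, Finset (σ a)} {c : ℕ}
    (hc : ∀ a ∈ s, #(t a) = c) (f : (Σ a, σ a) → M) :
    𝔼 p ∈ s.sigma t, f p = 𝔼 a ∈ s, 𝔼 b ∈ t a, f ⟨a, b⟩ := by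
  have hfibre : ∀ a ∈ s, 𝔼 b ∈ t a, f ⟨a, b⟩ = (c : ℚ≥0)⁻¹ • ∑ b ∈ t a, f ⟨a, b⟩ :=
    fun a ha => by rw [expect, hc a ha]
  rw [expect_congr rfl hfibre, expect, expect, ← smul_sum, sum_sigma, card_sigma, sum_congr rfl hc,
    sum_const, smul_eq_mul, Nat.cast_mul, mul_inv, mul_smul]

lemma expect_offDiag_fst {s : Finset α} (hs : s.Nontrivial) (f : α → M) :
    𝔼 p ∈ s.offDiag, f p.1 = 𝔼 a ∈ s, f a := by
  classical
  calc 𝔼 p ∈ s.offDiag, f p.1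
      = 𝔼 q ∈ s.sigma fun a => s.erase a, f q.1 := by
        refine expect_nbij' (fun p => ⟨p.1, p.2⟩) (fun q => (q.1, q.2)) ?_ ?_ ?_ ?_ ?_ <;>
          simp +contextual [eq_comm]
    _ = 𝔼 a ∈ s, 𝔼 _b ∈ s.erase a, f a :=
        expect_sigma_of_card_eq (fun _ => card_erase_of_mem) _
    _ = 𝔼 a ∈ s, f a := expect_congr rfl fun _ _ => expect_const hs.erase_nonempty _

lemma expect_offDiag_snd {s : Finset α} (hs : s.Nontrivial) (f : α → M) :
    𝔼 p ∈ s.offDiag, f p.2 = 𝔼 a ∈ s, f a := by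
  rw [← expect_offDiag_fst hs]
  refine expect_nbij' Prod.swap Prod.swap ?_ ?_ ?_ ?_ ?_ <;> simp +contextual [eq_comm]

lemma expect_offDiag_abs_sub_pow_le {s : Finset α} (hs : s.Nontrivial) (f : α → ℝ) (c : ℝ) {m : ℕ}
    (hm : m ≠ 0) :
    𝔼 p ∈ s.offDiag, |f p.2 - f p.1| ^ m ≤ 2 ^ m * 𝔼 a ∈ s, |f a - c| ^ m := by
  have hpair (p : α × α) :
      |f p.2 - f p.1| ^ m ≤ 2 ^ (m - 1) * (|f p.2 - c| ^ m + |f p.1 - c| ^ m) := by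
    refine le_trans ?_ (add_pow_le (abs_nonneg _) (abs_nonneg _) m)
    gcongr
    simpa using abs_sub (f p.2 - c) (f p.1 - c)
  calc 𝔼 p ∈ s.offDiag, |f p.2 - f p.1| ^ m
      ≤ 𝔼 p ∈ s.offDiag, 2 ^ (m - 1) * (|f p.2 - c| ^ m + |f p.1 - c| ^ m) :=
        expect_le_expect fun p _ => hpair p
    _ = 2 ^ (m - 1) * 2 * 𝔼 a ∈ s, |f a - c| ^ m := by
        rw [← mul_expect, expect_add_distrib, expect_offDiag_fst hs fun a => |f a - c| ^ m,
          expect_offDiag_snd hs fun a => |f a - c| ^ m]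
        ring
    _ = 2 ^ m * 𝔼 a ∈ s, |f a - c| ^ m := by rw [pow_sub_one_mul hm]

lemma expect_powersetCard_succ [DecidableEq α] (U : Finset α) (k : ℕ) (F : Finset α → M) :
    𝔼 T ∈ U.powersetCard (k + 1), F T
      = 𝔼 T ∈ U.powersetCard k, 𝔼 y ∈ U \ T, F (insert y T) := by
  calc 𝔼 T ∈ U.powersetCard (k + 1), F T
      = 𝔼 T ∈ U.powersetCard (k + 1), 𝔼 _y ∈ T, F T := by
        refine expect_congr rfl fun T hT => (expect_const (card_pos.1 ?_) _).symm
        rw [(mem_powersetCard.1 hT).2]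
        exact k.succ_pos
    _ = 𝔼 q ∈ (U.powersetCard (k + 1)).sigma fun T => T, F q.1 :=
        (expect_sigma_of_card_eq (t := fun T => T) (c := k + 1)
          (fun T hT => (mem_powersetCard.1 hT).2) fun q => F q.1).symm
    _ = 𝔼 q ∈ (U.powersetCard k).sigma (U \ ·), F (insert q.2 q.1) := by
        refine expect_nbij' (fun q => ⟨q.1.erase q.2, q.2⟩) (fun q => ⟨insert q.2 q.1, q.2⟩)
          ?_ ?_ ?_ ?_ ?_ <;> rintro ⟨T, y⟩ h <;>
          simp only [mem_sigma, mem_powersetCard, mem_sdiff] at h ⊢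
        · obtain ⟨⟨hTU, hT⟩, hy⟩ := h
          exact ⟨⟨(erase_subset _ _).trans hTU, by rw [card_erase_of_mem hy, hT, k.add_sub_cancel]⟩,
            hTU hy, notMem_erase _ _⟩
        · obtain ⟨⟨hTU, hT⟩, hyU, hyT⟩ := h
          exact ⟨⟨insert_subset hyU hTU, by rw [card_insert_of_notMem hyT, hT]⟩,
            mem_insert_self _ _⟩
        · rw [insert_erase h.2]
        · rw [erase_insert h.2.2]
        · rw [insert_erase h.2]
    _ = 𝔼 T ∈ U.powersetCard k, 𝔼 y ∈ U \ T, F (insert y T) := by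
        refine expect_sigma_of_card_eq (c := #U - k) (fun T hT => ?_) _
        rw [card_sdiff_of_subset (mem_powersetCard.1 hT).1, (mem_powersetCard.1 hT).2]

end Average

/-! ### Sampling without replacement -/

section Sampling

variable {α : Type*} {U T : Finset α} {f g : α → ℝ} {b : ℝ} {k : ℕ}

lemma sum_sub_expect (U : Finset α) (f : α → ℝ) : ∑ w ∈ U, (f w - 𝔼 u ∈ U, f u) = 0 := by
  rw [sum_sub_distrib, sum_const, nsmul_eq_mul, card_mul_expect, sub_self]

lemma abs_sub_expect_le (hf : ∀ w ∈ U, |f w| ≤ b) {w : α} (hw : w ∈ U) :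
    |f w - 𝔼 u ∈ U, f u| ≤ 2 * b := by
  have hmean : |𝔼 u ∈ U, f u| ≤ b := (abs_expect_le U f).trans (expect_le ⟨w, hw⟩ hf)
  linarith [abs_sub (f w) (𝔼 u ∈ U, f u), hf w hw]

lemma abs_sum_le_abs_sum_sub_expect_add (hT : T ⊆ U) (f : α → ℝ) :
    |∑ w ∈ T, f w| ≤ |∑ w ∈ T, (f w - 𝔼 u ∈ U, f u)| + |∑ w ∈ U, f w| := by
  have hsplit : ∑ w ∈ T, f w = ∑ w ∈ T, (f w - 𝔼 u ∈ U, f u) + #T * 𝔼 u ∈ U, f u := by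
    rw [sum_sub_distrib, sum_const, nsmul_eq_mul, sub_add_cancel]
  have hmean : |#T * 𝔼 u ∈ U, f u| ≤ |∑ w ∈ U, f w| := by
    rw [← card_mul_expect, abs_mul, abs_mul, Nat.abs_cast, Nat.abs_cast]
    gcongr
  rw [hsplit]
  exact (abs_add_le _ _).trans (by gcongr)

lemma expect_sdiff [DecidableEq α] (hg : ∑ w ∈ U, g w = 0) (hT : T ⊆ U) :
    𝔼 y ∈ U \ T, g y = -(∑ w ∈ T, g w) / #(U \ T) := by
  rw [expect_eq_sum_div_card, sum_sdiff_eq_sub hT, hg, zero_sub]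

lemma abs_sum_sdiff_le_abs_sum_sub_expect_add [DecidableEq α] (hT : T ⊆ U) (f : α → ℝ) :
    |∑ w ∈ U \ T, f w| ≤ |∑ w ∈ T, (f w - 𝔼 u ∈ U, f u)| + |∑ w ∈ U, f w| := by
  have h := abs_sum_le_abs_sum_sub_expect_add (sdiff_subset (s := U) (t := T)) f
  have hneg : ∑ w ∈ U \ T, (f w - 𝔼 u ∈ U, f u) = -∑ w ∈ T, (f w - 𝔼 u ∈ U, f u) := by
    rw [sum_sdiff_eq_sub hT, sum_sub_expect, zero_sub]
  rwa [hneg, abs_neg] at h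

-- The mean of a new element is a nonpositive multiple of `∑ w ∈ T, g w`, so against an odd power of
-- this sum it contributes a nonpositive amount.
lemma expect_powersetCard_succ_le [DecidableEq α] (hg : ∑ w ∈ U, g w = 0) (hk : k < #U) {j : ℕ}
    (hj : Odd j) {c : ℝ} (hc : 0 ≤ c) {F H : Finset α → ℝ}
    (hF : ∀ T ⊆ U, ∀ y ∈ U \ T,
      F (insert y T) ≤ H T + c * (∑ w ∈ T, g w) ^ j * g y) :
    𝔼 T ∈ U.powersetCard (k + 1), F T ≤ 𝔼 T ∈ U.powersetCard k, H T := by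
  rw [expect_powersetCard_succ]
  refine expect_le_expect fun T hT => ?_
  obtain ⟨hTU, rfl⟩ := mem_powersetCard.1 hT
  have hne : (U \ T).Nonempty := sdiff_nonempty_of_card_lt_card hk
  have hdrift : c * (∑ w ∈ T, g w) ^ j * 𝔼 y ∈ U \ T, g y ≤ 0 := by
    have hpow : 0 ≤ (∑ w ∈ T, g w) ^ (j + 1) := hj.add_one.pow_nonneg _
    calc c * (∑ w ∈ T, g w) ^ j * 𝔼 y ∈ U \ T, g y
        = -(c * (∑ w ∈ T, g w) ^ (j + 1) / #(U \ T)) := by rw [expect_sdiff hg hTU]; ring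
      _ ≤ 0 := neg_nonpos.2 (by positivity)
  calc 𝔼 y ∈ U \ T, F (insert y T)
      ≤ 𝔼 y ∈ U \ T, (H T + c * (∑ w ∈ T, g w) ^ j * g y) := expect_le_expect (hF T hTU)
    _ = H T + c * (∑ w ∈ T, g w) ^ j * 𝔼 y ∈ U \ T, g y := by
        rw [expect_add_distrib, expect_const hne, mul_expect]
    _ ≤ H T := by linarith

lemma expect_sum_sq_le (hg : ∑ w ∈ U, g w = 0) (hb : ∀ w ∈ U, |g w| ≤ b) (hk : k ≤ #U) :
    𝔼 T ∈ U.powersetCard k, (∑ w ∈ T, g w) ^ 2 ≤ b ^ 2 * k := by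
  classical
  induction k with
  | zero => simp
  | succ k ih =>
    have hstep : ∀ T ⊆ U, ∀ y ∈ U \ T, (∑ w ∈ insert y T, g w) ^ 2
        ≤ (∑ w ∈ T, g w) ^ 2 + b ^ 2 + 2 * (∑ w ∈ T, g w) ^ 1 * g y := by
      intro T _ y hy
      obtain ⟨hyU, hyT⟩ := mem_sdiff.1 hy
      rw [sum_insert hyT]
      linarith [sq_le_sq' (neg_le_of_abs_le (hb y hyU)) (le_of_abs_le (hb y hyU))]
    calc 𝔼 T ∈ U.powersetCard (k + 1), (∑ w ∈ T, g w) ^ 2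
        ≤ 𝔼 T ∈ U.powersetCard k, ((∑ w ∈ T, g w) ^ 2 + b ^ 2) :=
          expect_powersetCard_succ_le hg hk odd_one zero_le_two hstep
      _ = 𝔼 T ∈ U.powersetCard k, (∑ w ∈ T, g w) ^ 2 + b ^ 2 := by
          rw [expect_add_distrib, expect_const (powersetCard_nonempty.2 (Nat.le_of_succ_le hk))]
      _ ≤ b ^ 2 * k + b ^ 2 := by gcongr; exact ih (Nat.le_of_succ_le hk)
      _ = b ^ 2 * (k + 1 : ℕ) := by push_cast; ring

lemma add_pow_four_le {x z : ℝ} (hz : |z| ≤ b) :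
    (x + z) ^ 4 ≤ x ^ 4 + 8 * b ^ 2 * x ^ 2 + 3 * b ^ 4 + 4 * x ^ 3 * z := by
  have hz2 : z ^ 2 ≤ b ^ 2 := sq_le_sq' (neg_le_of_abs_le hz) (le_of_abs_le hz)
  have hz4 : z ^ 4 ≤ b ^ 4 := by
    have := pow_le_pow_left₀ (sq_nonneg z) hz2 2
    linarith
  have hcross : 4 * x * z ^ 3 ≤ 2 * (x ^ 2 * z ^ 2) + 2 * z ^ 4 := by
    linarith [mul_nonneg (sq_nonneg z) (sq_nonneg (x - z))]
  have hmid : x ^ 2 * z ^ 2 ≤ x ^ 2 * b ^ 2 := by gcongr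
  linarith

lemma expect_sum_pow_four_le (hg : ∑ w ∈ U, g w = 0) (hb : ∀ w ∈ U, |g w| ≤ b) (hk : k ≤ #U) :
    𝔼 T ∈ U.powersetCard k, (∑ w ∈ T, g w) ^ 4 ≤ 4 * b ^ 4 * k ^ 2 := by
  classical
  induction k with
  | zero => simp
  | succ k ih =>
    have hstep : ∀ T ⊆ U, ∀ y ∈ U \ T, (∑ w ∈ insert y T, g w) ^ 4
        ≤ (∑ w ∈ T, g w) ^ 4 + 8 * b ^ 2 * (∑ w ∈ T, g w) ^ 2 + 3 * b ^ 4
          + 4 * (∑ w ∈ T, g w) ^ 3 * g y := by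
      intro T _ y hy
      obtain ⟨hyU, hyT⟩ := mem_sdiff.1 hy
      rw [sum_insert hyT, add_comm (g y)]
      exact add_pow_four_le (hb y hyU)
    have hk' : k ≤ #U := Nat.le_of_succ_le hk
    calc 𝔼 T ∈ U.powersetCard (k + 1), (∑ w ∈ T, g w) ^ 4
        ≤ 𝔼 T ∈ U.powersetCard k,
            ((∑ w ∈ T, g w) ^ 4 + 8 * b ^ 2 * (∑ w ∈ T, g w) ^ 2 + 3 * b ^ 4) :=
          expect_powersetCard_succ_le hg hk (by decide) zero_le_four hstep
      _ = 𝔼 T ∈ U.powersetCard k, (∑ w ∈ T, g w) ^ 4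
            + 8 * b ^ 2 * 𝔼 T ∈ U.powersetCard k, (∑ w ∈ T, g w) ^ 2 + 3 * b ^ 4 := by
          rw [expect_add_distrib, expect_add_distrib, mul_expect,
            expect_const (powersetCard_nonempty.2 hk')]
      _ ≤ 4 * b ^ 4 * k ^ 2 + 8 * b ^ 2 * (b ^ 2 * k) + 3 * b ^ 4 := by
          gcongr
          exacts [ih hk', expect_sum_sq_le hg hb hk']
      _ ≤ 4 * b ^ 4 * (k + 1 : ℕ) ^ 2 := by
          push_cast
          linarith [show 0 ≤ b ^ 4 by positivity]

lemma expect_abs_sum_pow_three_le (hg : ∑ w ∈ U, g w = 0) (hb₀ : 0 ≤ b)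
    (hb : ∀ w ∈ U, |g w| ≤ b) (hk : k ≤ #U) :
    𝔼 T ∈ U.powersetCard k, |∑ w ∈ T, g w| ^ 3 ≤ 2 * b ^ 3 * √k ^ 3 := by
  refine le_of_sq_le_sq ?_ (by positivity)
  calc (𝔼 T ∈ U.powersetCard k, |∑ w ∈ T, g w| ^ 3) ^ 2
      = (𝔼 T ∈ U.powersetCard k, |∑ w ∈ T, g w| * |∑ w ∈ T, g w| ^ 2) ^ 2 := by
        simp only [← pow_succ']
    _ ≤ (𝔼 T ∈ U.powersetCard k, |∑ w ∈ T, g w| ^ 2)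
          * 𝔼 T ∈ U.powersetCard k, (|∑ w ∈ T, g w| ^ 2) ^ 2 := expect_mul_sq_le_sq_mul_sq _ _ _
    _ = (𝔼 T ∈ U.powersetCard k, (∑ w ∈ T, g w) ^ 2)
          * 𝔼 T ∈ U.powersetCard k, (∑ w ∈ T, g w) ^ 4 := by simp only [sq_abs, ← pow_mul]
    _ ≤ b ^ 2 * k * (4 * b ^ 4 * k ^ 2) := by
        gcongr
        exacts [expect_sum_sq_le hg hb hk, expect_sum_pow_four_le hg hb hk]
    _ = (2 * b ^ 3 * √k ^ 3) ^ 2 := by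
        rw [mul_pow, ← pow_mul, pow_mul' (√k), Real.sq_sqrt k.cast_nonneg]
        ring

lemma expect_abs_sum_sub_expect_pow_three_le (hb₀ : 0 ≤ b) (hf : ∀ w ∈ U, |f w| ≤ b)
    (hk : k ≤ #U) :
    𝔼 T ∈ U.powersetCard k, |∑ w ∈ T, (f w - 𝔼 u ∈ U, f u)| ^ 3 ≤ 16 * b ^ 3 * √k ^ 3 := by
  have h := expect_abs_sum_pow_three_le (sum_sub_expect U f) (mul_nonneg zero_le_two hb₀)
    (fun w hw => abs_sub_expect_le hf hw) hk
  linarith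

end Sampling

/-! ### Swapping two vertices -/

section Swap

variable {n : ℕ} {G : Finset (Sym2 (Fin n))} {T : Finset (Fin n)} {x y : Fin n}

lemma cast_dS (G : Finset (Sym2 (Fin n))) (S : Finset (Fin n)) (v : Fin n) :
    (dS G S v : ℝ) = ∑ w ∈ S, if s(v, w) ∈ G then (1 : ℝ) else 0 := by
  simp only [dS, sum_boole]

lemma edgesIn_insert (hG : IsGraph G) {v : Fin n} (hv : v ∉ T) :
    edgesIn G (insert v T) = edgesIn G T + dS G T v := by
  classical
  have hinj : Function.Injective fun w : Fin n => s(v, w) := fun _ _ => Sym2.congr_right.1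
  have hsplit : {e ∈ G | ∀ u ∈ e, u ∈ insert v T}
      = {e ∈ G | ∀ u ∈ e, u ∈ T} ∪ {w ∈ T | s(v, w) ∈ G}.image fun w => s(v, w) := by
    ext e
    induction e using Sym2.ind with
    | _ a b =>
      have hloop : s(a, b) ∈ G → a ≠ b := fun h => by simpa using hG _ h
      have hswap : s(a, b) = s(b, a) := Sym2.eq_swap
      simp only [mem_filter, mem_union, mem_image, Sym2.mem_iff, forall_eq_or_imp, forall_eq,
        mem_insert, Sym2.eq_iff]
      grind
  have hdisj : Disjoint {e ∈ G | ∀ u ∈ e, u ∈ T}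
      ({w ∈ T | s(v, w) ∈ G}.image fun w => s(v, w)) := by
    rw [disjoint_left]
    rintro _ he he'
    obtain ⟨w, _, rfl⟩ := mem_image.1 he'
    exact hv ((mem_filter.1 he).2 v (Sym2.mem_mk_left v w))
  unfold edgesIn dS
  rw [← card_image_of_injective _ hinj, ← card_union_of_disjoint hdisj, ← hsplit]

/-- The signed adjacency `1[w ~ y] - 1[w ~ x]`: what a vertex `w ∈ S` contributes to `e(S') - e(S)`
when `x ∈ S` is exchanged for `y ∉ S`. -/
def adjDiff (G : Finset (Sym2 (Fin n))) (x y w : Fin n) : ℝ :=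
  (if s(y, w) ∈ G then 1 else 0) - (if s(x, w) ∈ G then 1 else 0)

lemma abs_adjDiff_le_one (G : Finset (Sym2 (Fin n))) (x y w : Fin n) : |adjDiff G x y w| ≤ 1 := by
  unfold adjDiff
  split_ifs <;> norm_num

lemma sum_adjDiff (G : Finset (Sym2 (Fin n))) (S : Finset (Fin n)) (x y : Fin n) :
    ∑ w ∈ S, adjDiff G x y w = (dS G S y : ℝ) - dS G S x := by
  simp only [adjDiff, sum_sub_distrib, cast_dS]

-- The adjacency of `x` and `y` itself cancels in the difference of degrees.
lemma sum_compl_pair_adjDiff (hG : IsGraph G) (hxy : x ≠ y) :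
    ∑ w ∈ {x, y}ᶜ, adjDiff G x y w = (dS G univ y : ℝ) - dS G univ x := by
  have hx : s(x, x) ∉ G := fun h => hG _ h (Sym2.mk_isDiag_iff.2 rfl)
  have hy : s(y, y) ∉ G := fun h => hG _ h (Sym2.mk_isDiag_iff.2 rfl)
  have hpair : ∑ w ∈ {x, y}, adjDiff G x y w = 0 := by
    simp [sum_pair hxy, adjDiff, hx, hy, Sym2.eq_swap (a := y) (b := x)]
  rw [← sum_adjDiff, ← sum_compl_add_sum {x, y}, hpair, add_zero]

lemma Wfun_insert_sub_Wfun_insert (hG : IsGraph G) (hx : x ∉ T) (hy : y ∉ T) (M k : ℕ) :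
    Wfun n M k G (insert y T) - Wfun n M k G (insert x T) = (∑ w ∈ T, adjDiff G x y w) / n := by
  rw [sum_adjDiff, Wfun, Wfun, edgesIn_insert hG hx, edgesIn_insert hG hy]
  push_cast
  ring

/-- `|W' - W| ^ i * |W̄' - W̄| ^ j` for the exchange of `x ∈ S` and `y ∉ S`. -/
def swapMoment (G : Finset (Sym2 (Fin n))) (M k i j : ℕ) (S : Finset (Fin n)) (x y : Fin n) : ℝ :=
  |Wfun n M k G (insert y (S.erase x)) - Wfun n M k G S| ^ i *
    |Wfun n M (n - k) G (insert x (Sᶜ.erase y)) - Wfun n M (n - k) G Sᶜ| ^ j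

lemma swapMoment_insert (hG : IsGraph G) (hxy : x ≠ y) (hT : T ⊆ {x, y}ᶜ) (M k i j : ℕ) :
    swapMoment G M k i j (insert x T) x y
      = |(∑ w ∈ T, adjDiff G x y w) / n| ^ i * |(∑ w ∈ {x, y}ᶜ \ T, adjDiff G x y w) / n| ^ j := by
  have hxT : x ∉ T := fun h => by simpa using hT h
  have hyT : y ∉ T := fun h => by simpa using hT h
  have hxR : x ∉ ({x, y}ᶜ \ T : Finset (Fin n)) := by simp
  have hyR : y ∉ ({x, y}ᶜ \ T : Finset (Fin n)) := by simp
  have hcompl : (insert x T)ᶜ = insert y ({x, y}ᶜ \ T) := by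
    ext w
    simp only [mem_compl, mem_insert, mem_sdiff, mem_singleton]
    grind
  rw [swapMoment, hcompl, erase_insert hxT, erase_insert hyR,
    Wfun_insert_sub_Wfun_insert hG hxT hyT, abs_sub_comm (Wfun n M (n - k) G _),
    Wfun_insert_sub_Wfun_insert hG hxR hyR]

lemma swapMoment_insert_le (hG : IsGraph G) (hxy : x ≠ y) (hT : T ⊆ {x, y}ᶜ) (M k i j : ℕ) :
    swapMoment G M k i j (insert x T) x y
      ≤ ((|∑ w ∈ T, (adjDiff G x y w - 𝔼 u ∈ {x, y}ᶜ, adjDiff G x y u)|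
          + |(dS G univ y : ℝ) - dS G univ x|) / n) ^ (i + j) := by
  have hin := abs_sum_le_abs_sum_sub_expect_add hT (adjDiff G x y)
  have hout := abs_sum_sdiff_le_abs_sum_sub_expect_add hT (adjDiff G x y)
  rw [sum_compl_pair_adjDiff hG hxy] at hin hout
  rw [swapMoment_insert hG hxy hT, pow_add, abs_div, abs_div, Nat.abs_cast]
  gcongr

lemma expect_swapMoment_insert_le (hG : IsGraph G) (hxy : x ≠ y) {k : ℕ} (hk : k + 2 ≤ n)
    {i j : ℕ} (hij : i + j = 3) (M l : ℕ) :
    𝔼 T ∈ powersetCard k {x, y}ᶜ, swapMoment G M l i j (insert x T) x y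
      ≤ 4 / n ^ 3 * (16 * √k ^ 3 + |(dS G univ y : ℝ) - dS G univ x| ^ 3) := by
  set D : ℝ := |(dS G univ y : ℝ) - dS G univ x|
  set X : Finset (Fin n) → ℝ :=
    fun T => |∑ w ∈ T, (adjDiff G x y w - 𝔼 u ∈ {x, y}ᶜ, adjDiff G x y u)|
  have hcard : k ≤ #({x, y}ᶜ : Finset (Fin n)) := by
    rw [card_compl, Fintype.card_fin, card_pair hxy]
    omega
  have hcube : ∀ T ∈ powersetCard k {x, y}ᶜ,
      swapMoment G M l i j (insert x T) x y ≤ 4 / n ^ 3 * (X T ^ 3 + D ^ 3) := by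
    intro T hT
    calc swapMoment G M l i j (insert x T) x y
        ≤ ((X T + D) / n) ^ 3 := hij ▸ swapMoment_insert_le hG hxy (mem_powersetCard.1 hT).1 M l i j
      _ ≤ 2 ^ (3 - 1) * (X T ^ 3 + D ^ 3) / n ^ 3 := by
          rw [div_pow]
          gcongr
          exact add_pow_le (abs_nonneg _) (abs_nonneg _) 3
      _ = 4 / n ^ 3 * (X T ^ 3 + D ^ 3) := by ring
  calc 𝔼 T ∈ powersetCard k {x, y}ᶜ, swapMoment G M l i j (insert x T) x y
      ≤ 𝔼 T ∈ powersetCard k {x, y}ᶜ, 4 / n ^ 3 * (X T ^ 3 + D ^ 3) := expect_le_expect hcube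
    _ = 4 / n ^ 3 * (𝔼 T ∈ powersetCard k {x, y}ᶜ, X T ^ 3 + D ^ 3) := by
        rw [← mul_expect, expect_add_distrib, expect_const (powersetCard_nonempty.2 hcard)]
    _ ≤ 4 / n ^ 3 * (16 * √k ^ 3 + D ^ 3) := by
        gcongr
        simpa only [one_pow, mul_one] using expect_abs_sum_sub_expect_pow_three_le zero_le_one
          (fun w _ => abs_adjDiff_le_one G x y w) hcard

lemma expect_SwapΩ_succ (k : ℕ) (F : Finset (Fin n) → Fin n → Fin n → ℝ) :
    𝔼 ω ∈ SwapΩ n (k + 1), F ω.1 ω.2.1 ω.2.2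
      = 𝔼 p ∈ (univ : Finset (Fin n)).offDiag, 𝔼 T ∈ powersetCard k {p.1, p.2}ᶜ,
          F (insert p.1 T) p.1 p.2 := by
  have hcard : ∀ p ∈ (univ : Finset (Fin n)).offDiag,
      #(powersetCard k ({p.1, p.2}ᶜ : Finset (Fin n))) = (n - 2).choose k := by
    intro p hp
    rw [card_powersetCard, card_compl, Fintype.card_fin, card_pair (mem_offDiag.1 hp).2.2]
  rw [← expect_sigma_of_card_eq hcard fun q => F (insert q.1.1 q.2) q.1.1 q.1.2]
  refine expect_nbij' (fun ω => ⟨(ω.2.1, ω.2.2), ω.1.erase ω.2.1⟩)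
    (fun q => ⟨insert q.1.1 q.2, q.1⟩) ?_ ?_ ?_ ?_ ?_
  · rintro ⟨S, x, y⟩ h
    simp only [SwapΩ, kSets, mem_sigma, mem_powersetCard, mem_product, mem_compl, mem_offDiag,
      mem_univ, true_and, subset_univ, subset_compl_iff_disjoint_right] at h ⊢
    obtain ⟨hS, hx, hy⟩ := h
    refine ⟨fun hxy => hy (hxy ▸ hx), ?_, ?_⟩
    · simp [hy]
    · rw [card_erase_of_mem hx, hS, k.add_sub_cancel]
  · rintro ⟨⟨x, y⟩, T⟩ h
    simp only [SwapΩ, kSets, mem_sigma, mem_powersetCard, mem_product, mem_compl, mem_offDiag,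
      mem_univ, true_and, subset_univ] at h ⊢
    obtain ⟨hxy, hT, hTk⟩ := h
    have hxT : x ∉ T := fun h => by simpa using hT h
    have hyT : y ∉ T := fun h => by simpa using hT h
    refine ⟨?_, mem_insert_self _ _, ?_⟩
    · rw [card_insert_of_notMem hxT, hTk]
    · simp [hxy.symm, hyT]
  · rintro ⟨S, x, y⟩ h
    simp only [SwapΩ, mem_sigma, mem_product] at h
    simp [insert_erase h.2.1]
  · rintro ⟨⟨x, y⟩, T⟩ h
    simp only [mem_sigma, mem_powersetCard] at h
    have hxT : x ∉ T := fun h' => by simpa using h.2.1 h'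
    simp [erase_insert hxT]
  · rintro ⟨S, x, y⟩ h
    simp only [SwapΩ, mem_sigma, mem_product] at h
    simp [insert_erase h.2.1]

lemma expect_swapMoment_le (hG : IsGraph G) {k : ℕ} (hk : 0 < k) (hkn : k < n) {i j : ℕ}
    (hij : i + j = 3) (M : ℕ) (c : ℝ) :
    𝔼 ω ∈ SwapΩ n k, swapMoment G M k i j ω.1 ω.2.1 ω.2.2
      ≤ (64 * √n ^ 3 + 32 * 𝔼 v, |(dS G univ v : ℝ) - c| ^ 3) / n ^ 3 := by
  obtain ⟨l, rfl⟩ : ∃ l, k = l + 1 := Nat.exists_eq_add_one.2 hk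
  have huniv : (univ : Finset (Fin n)).Nontrivial := by
    rw [← one_lt_card_iff_nontrivial, card_univ, Fintype.card_fin]
    omega
  have hoff : (univ : Finset (Fin n)).offDiag.Nonempty := by
    obtain ⟨a, ha, b, hb, hab⟩ := huniv
    exact ⟨(a, b), mem_offDiag.2 ⟨ha, hb, hab⟩⟩
  have hln : (l : ℝ) ≤ n := by exact_mod_cast (by omega : l ≤ n)
  calc 𝔼 ω ∈ SwapΩ n (l + 1), swapMoment G M (l + 1) i j ω.1 ω.2.1 ω.2.2
      = 𝔼 p ∈ (univ : Finset (Fin n)).offDiag, 𝔼 T ∈ powersetCard l {p.1, p.2}ᶜ,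
          swapMoment G M (l + 1) i j (insert p.1 T) p.1 p.2 := expect_SwapΩ_succ l _
    _ ≤ 𝔼 p ∈ (univ : Finset (Fin n)).offDiag,
          4 / n ^ 3 * (16 * √l ^ 3 + |(dS G univ p.2 : ℝ) - dS G univ p.1| ^ 3) :=
        expect_le_expect fun p hp =>
          expect_swapMoment_insert_le hG (mem_offDiag.1 hp).2.2 hkn hij M (l + 1)
    _ = 4 / n ^ 3 * (16 * √l ^ 3 + 𝔼 p ∈ (univ : Finset (Fin n)).offDiag,
          |(dS G univ p.2 : ℝ) - dS G univ p.1| ^ 3) := by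
        rw [← mul_expect, expect_add_distrib, expect_const hoff]
    _ ≤ 4 / n ^ 3 * (16 * √n ^ 3 + 2 ^ 3 * 𝔼 v, |(dS G univ v : ℝ) - c| ^ 3) := by
        gcongr
        exact expect_offDiag_abs_sub_pow_le huniv (fun v => (dS G univ v : ℝ)) c three_ne_zero
    _ = (64 * √n ^ 3 + 32 * 𝔼 v, |(dS G univ v : ℝ) - c| ^ 3) / n ^ 3 := by ring

end Swap

lemma sqrt_pow_three_le_rpow {a ε : ℝ} (ha : 1 ≤ a) (hε : 0 ≤ ε) :
    √a ^ 3 ≤ a ^ ((3 : ℝ) / 2 + ε) := by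
  rw [Real.sqrt_eq_rpow, ← Real.rpow_mul_natCast (zero_le_one.trans ha)]
  exact Real.rpow_le_rpow_of_exponent_le ha (by push_cast; linarith)

lemma rpow_div_pow_three {a : ℝ} (ha : 0 < a) (ε : ℝ) :
    a ^ ((3 : ℝ) / 2 + ε) / a ^ 3 = a ^ (-(3 : ℝ) / 2 + ε) := by
  rw [← Real.rpow_sub_natCast ha.ne']
  congr 1
  push_cast
  ring

theorem stmt_5_general {n k : ℕ} {ε C : ℝ} (hε : 0 ≤ ε) {G : Finset (Sym2 (Fin n))}
    (hG : IsGraph G) (hk : 0 < k) (hkn : k < n)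
    (hdeg : (1 / (n : ℝ)) * ∑ v : Fin n, |(dS G univ v : ℝ) - 2 * (#G : ℝ) / n| ^ 3
      ≤ C * (n : ℝ) ^ ((3 : ℝ) / 2 + ε)) {i : ℕ} (hi : i ≤ 3) :
    Exu (SwapΩ n k) (fun ω =>
        |Wfun n #G k G (insert ω.2.2 (ω.1.erase ω.2.1)) - Wfun n #G k G ω.1| ^ i *
        |Wfun n #G (n - k) G (insert ω.2.1 (ω.1ᶜ.erase ω.2.2))
          - Wfun n #G (n - k) G ω.1ᶜ| ^ (3 - i))
      ≤ (32 * C + 64) * (n : ℝ) ^ (-(3 : ℝ) / 2 + ε) := by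
  have hn : (1 : ℝ) ≤ n := by exact_mod_cast hk.trans hkn
  have hdeg' : 𝔼 v : Fin n, |(dS G univ v : ℝ) - 2 * (#G : ℝ) / n| ^ 3
      ≤ C * (n : ℝ) ^ ((3 : ℝ) / 2 + ε) := by
    rwa [Fintype.expect_eq_sum_div_card, Fintype.card_fin, div_eq_inv_mul, ← one_div]
  rw [Exu_eq_expect]
  calc 𝔼 ω ∈ SwapΩ n k, swapMoment G #G k i (3 - i) ω.1 ω.2.1 ω.2.2
      ≤ (64 * √n ^ 3 + 32 * 𝔼 v, |(dS G univ v : ℝ) - 2 * (#G : ℝ) / n| ^ 3) / n ^ 3 :=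
        expect_swapMoment_le hG hk hkn (Nat.add_sub_cancel' hi) _ _
    _ ≤ (64 * (n : ℝ) ^ ((3 : ℝ) / 2 + ε) + 32 * (C * (n : ℝ) ^ ((3 : ℝ) / 2 + ε))) / n ^ 3 := by
        gcongr
        exact sqrt_pow_three_le_rpow hn hε
    _ = (32 * C + 64) * (n : ℝ) ^ (-(3 : ℝ) / 2 + ε) := by
        rw [← rpow_div_pow_three (zero_lt_one.trans_le hn)]
        ring

lemma pos_of_div_pos {k n : ℕ} (h : 0 < (k : ℝ) / n) : 0 < k ∧ 0 < n := by
  constructor <;> refine Nat.pos_of_ne_zero ?_ <;> rintro rfl <;> simp at h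

/-- Lemma 2.4: third moment bounds.
Fix `δ, ε, C > 0`. There are `C' > 0` and `n₀` such that for all `n ≥ n₀`, any graph `G` on
`[n]` with `M = e(G)` edges, any `k` with `k/n ∈ [δ, 1-δ]`, if
`(1/n)·Σ_v |d(v) - d(G)|³ ≤ C·n^(3/2+ε)` then for each `i ∈ {0,1,2,3}`,
`E[|W'-W|^i·|W̄'-W̄|^(3-i)] ≤ C'·n^(-3/2+ε)`. -/
theorem stmt_5 (δ ε C : ℝ) (hδ : 0 < δ) (hε : 0 < ε) (hC : 0 < C) :
    ∃ C' > (0:ℝ), ∃ n₀ : ℕ, ∀ n ≥ n₀, ∀ (G : Finset (Sym2 (Fin n))), IsGraph G →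
      ∀ M : ℕ, G.card = M →
      ∀ k : ℕ, δ ≤ (k : ℝ) / n → (k : ℝ) / n ≤ 1 - δ →
      (1 / (n:ℝ)) * ∑ v : Fin n, |(dS G Finset.univ v : ℝ) - 2 * (M:ℝ) / n| ^ 3
          ≤ C * (n:ℝ) ^ ((3:ℝ)/2 + ε) →
      ∀ i ≤ 3,
        Exu (SwapΩ n k) (fun ω =>
            |Wfun n M k G (insert ω.2.2 (ω.1.erase ω.2.1)) - Wfun n M k G ω.1| ^ i *
            |Wfun n M (n - k) G (insert ω.2.1 (ω.1ᶜ.erase ω.2.2)) - Wfun n M (n - k) G ω.1ᶜ| ^ (3 - i))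
          ≤ C' * (n:ℝ) ^ (-(3:ℝ)/2 + ε) :=
  ⟨32 * C + 64, by positivity, 0, fun n _ G hG M hM k hk hk' hdeg i hi => by
    obtain ⟨hk₀, hn₀⟩ := pos_of_div_pos (hδ.trans_le hk)
    have hkn : k < n := by
      exact_mod_cast (div_lt_one (Nat.cast_pos.2 hn₀)).1 (hk'.trans_lt (sub_lt_self 1 hδ))
    subst hM
    exact stmt_5_general hε.le hG hk₀ hkn hdeg hi⟩
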